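/- arXiv:2206.04612 — 2 statements merged into one kernel-verified Lean document; each statement's English description precedes it below -/
import Mathlib

section
/- Let X be a finite abstract simplicial complex with two weight functions ω′, ω : X → ℕ (each satisfying the weighted-complex condition) such that ω′(σ) ≤ ω(σ) for every simplex σ. Define θ_n : C_n(X; R) → C_n(X; R) on basis simplices by θ_n(σ) = π^{ω(σ) − ω′(σ)} σ. Then θ is a chain map between the weighted chain complexes: for every n, ∂_n^v ∘ θ_n = θ_{n−1} ∘ ∂_n^{v′}, where ∂_n^{v′} and ∂_n^v are the weighted boundaries for ω′ and ω respectively. -/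
/-!
Both sides are linear in the chain, so it suffices to compare them on a simplex `σ` of the complex
(`theta_wBdry_single`). There the coefficients of a face `τ` are, up to the common sign,
`π ^ ((w σ - w' σ) + (w τ - w σ))` and `π ^ ((w' τ - w' σ) + (w τ - w' τ))`. Both exponents equal
`w τ - w' σ`, since `w' ≤ w` and both weights are antitone, so that none of the natural-number
subtractions truncates.
-/

open Finset

variable {V : Type*} [LinearOrder V]

/-- The `n`-cells (simplices on `n+1` vertices) of a collection `S` of finite sets. -/
def nCells (S : Finset (Finset V)) (n : ℕ) : Finset (Finset V) :=
  S.filter fun σ => σ.card = n + 1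

/-- The position of the vertex `x` in the simplex `σ` (number of smaller vertices). -/
def vIdx (σ : Finset V) (x : V) : ℕ := (σ.filter fun y => y < x).card

/-- The unweighted simplicial boundary operator (on all degrees at once), with
coefficients in a commutative ring `A`; it sends a `0`-simplex to `0`. -/
noncomputable def bdry (A : Type*) [CommRing A] :
    (Finset V →₀ A) →ₗ[A] (Finset V →₀ A) :=
  Finsupp.lsum A fun σ =>
    LinearMap.toSpanSingleton A _
      (if 2 ≤ σ.card then
        ∑ x ∈ σ, ((-1 : A) ^ vIdx σ x) • Finsupp.single (σ.erase x) (1 : A)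
      else 0)

/-- The weighted simplicial boundary operator over `R = 𝔽[[π]]` (with `π = PowerSeries.X`),
for the simplex-weight function `w`. -/
noncomputable def wBdry (F : Type*) [Field F] (w : Finset V → ℕ) :
    (Finset V →₀ PowerSeries F) →ₗ[PowerSeries F] (Finset V →₀ PowerSeries F) :=
  Finsupp.lsum (PowerSeries F) fun σ =>
    LinearMap.toSpanSingleton (PowerSeries F) _
      (if 2 ≤ σ.card then
        ∑ x ∈ σ, ((-1 : PowerSeries F) ^ vIdx σ x *
            (PowerSeries.X : PowerSeries F) ^ (w (σ.erase x) - w σ)) •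
          Finsupp.single (σ.erase x) (1 : PowerSeries F)
      else 0)

/-- A weighted simplicial complex `(X, ω)`: a finite abstract simplicial complex together
with a weight function `ω` that is antitone with respect to inclusion of simplices. -/
structure WeightedComplex (V : Type*) [LinearOrder V] where
  simplices : Finset (Finset V)
  nonempty_mem : ∀ σ ∈ simplices, σ.Nonempty
  down_closed : ∀ σ ∈ simplices, ∀ τ : Finset V, τ ⊆ σ → τ.Nonempty → τ ∈ simplices
  w : Finset V → ℕ
  w_mono : ∀ σ ∈ simplices, ∀ μ ∈ simplices, σ ⊆ μ → w μ ≤ w σ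

/-- The map `θ` determined by two weight functions `w'`, `w` (with `w' ≤ w`):
on a basis simplex `σ` it is multiplication by `π^(w σ - w' σ)`. -/
noncomputable def theta (F : Type*) [Field F] (w' w : Finset V → ℕ) :
    (Finset V →₀ PowerSeries F) →ₗ[PowerSeries F] (Finset V →₀ PowerSeries F) :=
  Finsupp.lsum (PowerSeries F) fun σ =>
    LinearMap.toSpanSingleton (PowerSeries F) _
      (((PowerSeries.X : PowerSeries F) ^ (w σ - w' σ)) •
        Finsupp.single σ (1 : PowerSeries F))

theorem theta_single (F : Type*) [Field F] (w' w : Finset V → ℕ) (σ : Finset V)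
    (a : PowerSeries F) :
    theta F w' w (Finsupp.single σ a) =
      Finsupp.single σ (a * (PowerSeries.X : PowerSeries F) ^ (w σ - w' σ)) := by
  simp [theta]

theorem wBdry_single (F : Type*) [Field F] (w : Finset V → ℕ) (σ : Finset V)
    (a : PowerSeries F) :
    wBdry F w (Finsupp.single σ a) =
      a • (if 2 ≤ σ.card then
        ∑ x ∈ σ, ((-1 : PowerSeries F) ^ vIdx σ x *
            (PowerSeries.X : PowerSeries F) ^ (w (σ.erase x) - w σ)) •
          Finsupp.single (σ.erase x) (1 : PowerSeries F)
      else 0) := by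
  rw [wBdry, Finsupp.lsum_single, LinearMap.toSpanSingleton_apply]

/-- The chain-map identity on a basis simplex `σ` of the complex, where every face involved is
again a simplex of the complex, so that no subtraction of weights is truncated. -/
theorem theta_wBdry_single
    (F : Type*) [Field F] (K : WeightedComplex V) (w' : Finset V → ℕ)
    (hw'mono : ∀ σ ∈ K.simplices, ∀ μ ∈ K.simplices, σ ⊆ μ → w' μ ≤ w' σ)
    (hle : ∀ σ ∈ K.simplices, w' σ ≤ K.w σ)
    (σ : Finset V) (hσ : σ ∈ K.simplices) (a : PowerSeries F) :
    wBdry F K.w (theta F w' K.w (Finsupp.single σ a)) =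
      theta F w' K.w (wBdry F w' (Finsupp.single σ a)) := by
  simp only [theta_single, wBdry_single, map_smul]
  split_ifs with h
  · simp only [map_sum, map_smul, theta_single, Finset.smul_sum, smul_smul, mul_one]
    refine Finset.sum_congr rfl fun x hx => ?_
    have hsub : σ.erase x ⊆ σ := Finset.erase_subset x σ
    have hne : (σ.erase x).Nonempty := by
      rw [← Finset.card_pos, Finset.card_erase_of_mem hx]
      omega
    have hτ : σ.erase x ∈ K.simplices := K.down_closed σ hσ _ hsub hne
    have h1 := K.w_mono _ hτ _ hσ hsub
    have h2 := hw'mono _ hτ _ hσ hsub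
    have h3 := hle _ hσ
    have h4 := hle _ hτ
    have key : (PowerSeries.X : PowerSeries F) ^ (K.w σ - w' σ) *
          PowerSeries.X ^ (K.w (σ.erase x) - K.w σ) =
        PowerSeries.X ^ (w' (σ.erase x) - w' σ) *
          PowerSeries.X ^ (K.w (σ.erase x) - w' (σ.erase x)) := by
      rw [← pow_add, ← pow_add]
      congr 1
      omega
    simp only [Finsupp.smul_single, smul_eq_mul, mul_one]
    congr 1
    linear_combination (a * (-1) ^ vIdx σ x) * key
  · simp

/-- Let `X` be a finite abstract simplicial complex with two weight
functions `w'`, `w` (each satisfying the weighted-complex condition) with `w' ≤ w` on all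
simplices.  Then `θ` is a chain map between the corresponding weighted chain complexes:
`∂ᵥ ∘ θ = θ ∘ ∂ᵥ'` on every chain of `C_•(X; R)`. -/
theorem theta_is_chain_map
    (F : Type*) [Field F] (K : WeightedComplex V) (w' : Finset V → ℕ)
    (hw'mono : ∀ σ ∈ K.simplices, ∀ μ ∈ K.simplices, σ ⊆ μ → w' μ ≤ w' σ)
    (hle : ∀ σ ∈ K.simplices, w' σ ≤ K.w σ)
    (c : Finset V →₀ PowerSeries F) (hc : c.support ⊆ K.simplices) :
    wBdry F K.w (theta F w' K.w c) = theta F w' K.w (wBdry F w' c) := by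
  rw [← Finsupp.sum_single c]
  simp only [Finsupp.sum, map_sum]
  exact Finset.sum_congr rfl fun σ hσ =>
    theta_wBdry_single F K w' hw'mono hle σ (hc hσ) (c σ)
end

section
/- Let (X, ω) be a weighted simplicial complex. Let {β_{κ_i} : κ_i ∈ K_n} be a distinguished basis in the sense of Lemma 1 for dimension n with K_n = {κ_1, …, κ_q} ordered so that ω(κ_i) ≤ ω(κ_{i+1}), and let M_{n+1} = {μ_1, …, μ_p} be the corresponding complement set in dimension n+1 (so {∂_{n+1}(μ_j)} is an 𝔽-basis of Im ∂_{n+1}) ordered so that ω(μ_j) ≥ ω(μ_{j+1}). Then there exists an 𝔽-basis φ_1, …, φ_q of ker(∂_n over 𝔽) such that: (1) φ_1, …, φ_p is an 𝔽-basis of ∂_{n+1}(C_{n+1}(X; 𝔽)); (2) there is a partition K_n = K_1 ∪ K_2 with K_1 = {κ_{i_1}, …, κ_{i_p}} and a bijection Φ : K_1 → M_{n+1}, Φ(κ_{i_k}) = μ_{j_k}, such that {φ_{p+1}, …, φ_q} = {β_κ : κ ∈ K_2}, and for every 1 ≤ k ≤ p there are coefficients b_l, d_h ∈ 𝔽 with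 b_{i_k} ≠ 0 and d_{j_k} ≠ 0 satisfying φ_k = Σ_{l ≥ i_k} b_l β_{κ_l} = Σ_{h ≤ j_k} d_h ∂_{n+1}(μ_h). -/
/-! The proof is the column reduction familiar from persistent homology.

Since `∂ ∘ ∂ = 0` (`bdry_bdry_single`), every `∂ μ_j` lies in the span of the `β_κ`, so it has a
coordinate vector `v_j ∈ 𝔽^q`, and the `v_j` are linearly independent.  For each `k`, pick in the
affine space `v_k + ⟨v_h : h < k⟩` an element whose first nonzero coordinate `i_k` is as far to
the right as possible (`exists_reduction`).  The indices `i_k` are distinct: if `i_k = i_h` with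
`h < k`, subtracting a multiple of the `h`-th chosen vector from the `k`-th one would move the
first nonzero coordinate further right.  The chosen vectors are the `φ_k` for `k ≤ p`, with
`j_k = k`; the remaining `φ_k` are the `β_{κ_l}` with `l` not among the `i_k`.  Together these
have pairwise distinct leading indices, hence are independent
(`linearIndependent_of_leading`), and counting dimensions (`span_eq_of_mem`) gives both spans. -/

open Finset

variable {V : Type*} [LinearOrder V]

/-! ### The boundary of a boundary vanishes -/

lemma bdry_single (A : Type*) [CommRing A] (σ : Finset V) :
    bdry A (Finsupp.single σ (1 : A)) =
      if 2 ≤ σ.card then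
        ∑ x ∈ σ, ((-1 : A) ^ vIdx σ x) • Finsupp.single (σ.erase x) (1 : A)
      else 0 := by
  simp only [bdry, Finsupp.lsum_single, LinearMap.toSpanSingleton_apply, one_smul]

lemma vIdx_erase_of_lt {σ : Finset V} {x y : V} (h : x < y) :
    vIdx (σ.erase y) x = vIdx σ x := by
  unfold vIdx
  congr 1
  ext z
  simp only [mem_filter, mem_erase]
  constructor
  · rintro ⟨⟨_, h1⟩, h2⟩
    exact ⟨h1, h2⟩
  · rintro ⟨h1, h2⟩
    exact ⟨⟨(h2.trans h).ne, h1⟩, h2⟩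

lemma vIdx_erase_add_one {σ : Finset V} {x y : V} (hx : x ∈ σ) (h : x < y) :
    vIdx (σ.erase x) y + 1 = vIdx σ y := by
  unfold vIdx
  rw [filter_erase]
  exact card_erase_add_one (mem_filter.2 ⟨hx, h⟩)

/-- The signs attached to the two orders in which two vertices can be removed are opposite. -/
lemma sign_cancel (A : Type*) [CommRing A] {σ : Finset V} {x y : V} (hx : x ∈ σ) (hy : y ∈ σ)
    (hne : x ≠ y) :
    (-1 : A) ^ vIdx σ x * (-1) ^ vIdx (σ.erase x) y +
      (-1 : A) ^ vIdx σ y * (-1) ^ vIdx (σ.erase y) x = 0 := by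
  rcases lt_or_gt_of_ne hne with h | h
  · rw [vIdx_erase_of_lt h, ← vIdx_erase_add_one hx h]
    ring
  · rw [vIdx_erase_of_lt h, ← vIdx_erase_add_one hy h]
    ring

lemma bdry_bdry_single (A : Type*) [CommRing A] (σ : Finset V) :
    bdry A (bdry A (Finsupp.single σ (1 : A))) = 0 := by
  rw [bdry_single]
  split_ifs with h2
  · simp only [map_sum, map_smul, bdry_single]
    by_cases h3 : 3 ≤ σ.card
    · have hc : ∀ x ∈ σ, 2 ≤ (σ.erase x).card := by
        intro x hx
        rw [card_erase_of_mem hx]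
        omega
      have hstep : ∀ x ∈ σ, ((-1 : A) ^ vIdx σ x) • (if 2 ≤ (σ.erase x).card then
            ∑ y ∈ σ.erase x, ((-1 : A) ^ vIdx (σ.erase x) y) •
              Finsupp.single ((σ.erase x).erase y) (1 : A) else 0) =
          ∑ y ∈ σ.erase x, ((-1 : A) ^ vIdx σ x * (-1) ^ vIdx (σ.erase x) y) •
              Finsupp.single ((σ.erase x).erase y) (1 : A) := by
        intro x hx
        rw [if_pos (hc x hx), smul_sum]
        simp only [mul_smul]
      rw [sum_congr rfl hstep, sum_sigma']
      refine sum_involution (fun a _ => ⟨a.2, a.1⟩) ?_ ?_ ?_ ?_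
      · rintro ⟨x, y⟩ hxy
        simp only [mem_sigma, mem_erase] at hxy
        rw [erase_right_comm (a := y), ← add_smul,
          sign_cancel A hxy.1 hxy.2.2 (Ne.symm hxy.2.1), zero_smul]
      · rintro ⟨x, y⟩ hxy _ heq
        simp only [mem_sigma, mem_erase] at hxy
        exact hxy.2.1 (congrArg Sigma.fst heq)
      · rintro ⟨x, y⟩ hxy
        simp only [mem_sigma, mem_erase] at hxy ⊢
        exact ⟨hxy.2.2, Ne.symm hxy.2.1, hxy.1⟩
      · rintro ⟨x, y⟩ _
        rfl
    · refine sum_eq_zero fun x hx => ?_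
      rw [if_neg, smul_zero]
      rw [card_erase_of_mem hx]
      omega
  · simp

/-! ### Column reduction and leading coordinates -/

/-- A choice of representatives, one in each `v k + ⟨v h : h < k⟩`, with pairwise distinct
leading (first nonzero) coordinates `i k`; the rows of `D` are their coefficients. -/
lemma exists_reduction {F : Type*} [Field F] {p q : ℕ} (v : Fin p → Fin q → F)
    (hv : LinearIndependent F v) :
    ∃ (i : Fin p → Fin q) (D : Fin p → Fin p → F), Function.Injective i ∧
      ∀ k, D k k = 1 ∧ (∀ h, k < h → D k h = 0) ∧
        (∑ h, D k h • v h) (i k) ≠ 0 ∧ ∀ l, l < i k → (∑ h, D k h • v h) l = 0 := by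
  classical
  -- `P k l`: some element of `v k + ⟨v h : h < k⟩` has its leading coordinate at `l`.
  let P : Fin p → Fin q → Prop := fun k l => ∃ c : Fin p → F, c k = 1 ∧
    (∀ h, k < h → c h = 0) ∧ (∑ h, c h • v h) l ≠ 0 ∧ ∀ m, m < l → (∑ h, c h • v h) m = 0
  have lead : ∀ w : Fin q → F, w ≠ 0 → ∃ l, w l ≠ 0 ∧ ∀ m, m < l → w m = 0 := by
    intro w hw
    have hne : (univ.filter fun l => w l ≠ 0).Nonempty := by
      obtain ⟨l, hl⟩ := Function.ne_iff.1 hw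
      exact ⟨l, by simpa using hl⟩
    refine ⟨(univ.filter fun l => w l ≠ 0).min' hne, ?_, fun m hm => ?_⟩
    · exact (mem_filter.1 (min'_mem _ hne)).2
    · by_contra h
      exact absurd (min'_le _ m (by simpa using h)) (not_le.2 hm)
  have leadP : ∀ k (c : Fin p → F), c k = 1 → (∀ h, k < h → c h = 0) →
      ∃ l, P k l ∧ (∑ h, c h • v h) l ≠ 0 := by
    intro k c hc1 hc2
    have hne : (∑ h, c h • v h) ≠ 0 := by
      intro h0
      have := Fintype.linearIndependent_iff.1 hv c h0 k
      rw [hc1] at this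
      exact one_ne_zero this
    obtain ⟨l, hl, hl'⟩ := lead _ hne
    exact ⟨l, ⟨c, hc1, hc2, hl, hl'⟩, hl⟩
  have hmax : ∀ k, ∃ l, P k l ∧ ∀ l', P k l' → l' ≤ l := by
    intro k
    have hne : (univ.filter fun l => P k l).Nonempty := by
      obtain ⟨l, hl, _⟩ := leadP k (Pi.single k 1) (by simp)
        (fun h hh => Pi.single_eq_of_ne hh.ne' _)
      exact ⟨l, by simpa using hl⟩
    refine ⟨(univ.filter fun l => P k l).max' hne, ?_, fun l' hl' => ?_⟩
    · exact (mem_filter.1 (max'_mem _ hne)).2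
    · exact le_max' _ l' (by simpa using hl')
  choose i hi himax using hmax
  choose D hD1 hD2 hD3 hD4 using hi
  refine ⟨i, D, ?_, fun k => ⟨hD1 k, hD2 k, hD3 k, hD4 k⟩⟩
  -- If `i h = i k` with `h < k`, cancelling the leading coordinate contradicts maximality.
  have key : ∀ h k, h < k → i h ≠ i k := by
    intro h k hk heq
    set x := ∑ a, D k a • v a with hx
    set y := ∑ a, D h a • v a with hy
    let t : F := x (i k) / y (i k)
    have hyk : y (i k) ≠ 0 := heq ▸ hD3 h
    have hsum : (∑ a, (D k a - t * D h a) • v a) = x - t • y := by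
      rw [hx, hy, smul_sum, ← sum_sub_distrib]
      exact sum_congr rfl fun a _ => by rw [sub_smul, mul_smul]
    obtain ⟨l, hl, hl0⟩ := leadP k (fun a => D k a - t * D h a)
      (by simp [hD1, hD2 h k hk])
      (fun a ha => by simp [hD2 k a ha, hD2 h a (hk.trans ha)])
    rw [hsum] at hl0
    rcases (himax k l hl).lt_or_eq with hlt | rfl
    · apply hl0
      have h1 : x l = 0 := hD4 k l hlt
      have h2 : y l = 0 := hD4 h l (heq ▸ hlt)
      simp [h1, h2]
    · apply hl0
      simp [t, div_mul_cancel₀ _ hyk]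
  intro a b hab
  rcases lt_trichotomy a b with h | h | h
  · exact absurd hab (key a b h)
  · exact h
  · exact absurd hab.symm (key b a h)

lemma linearIndependent_of_leading {F : Type*} [Field F] {m q : ℕ} (u : Fin m → Fin q → F)
    (e : Fin m → Fin q) (he : Function.Injective e) (h1 : ∀ k, u k (e k) ≠ 0)
    (h0 : ∀ k l, l < e k → u k l = 0) : LinearIndependent F u := by
  classical
  rw [Fintype.linearIndependent_iff]
  intro c hc
  by_contra! hne
  obtain ⟨k₀, hk₀⟩ := hne
  obtain ⟨k, hk, hmin⟩ := exists_min_image (univ.filter fun k => c k ≠ 0) e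
    ⟨k₀, by simpa using hk₀⟩
  have hk' : c k ≠ 0 := (mem_filter.1 hk).2
  have hval := congrFun hc (e k)
  rw [Finset.sum_apply, sum_eq_single k] at hval
  · exact mul_ne_zero hk' (h1 k) (by simpa using hval)
  · intro a _ hak
    by_cases ha : c a = 0
    · simp [ha]
    · have hle := hmin a (by simpa using ha)
      simp [h0 a (e k) (lt_of_le_of_ne hle fun h => hak (he h.symm))]
  · simp

lemma span_eq_of_mem {F E : Type*} [Field F] [AddCommGroup E] [Module F E] {m : ℕ}
    {a b : Fin m → E} (ha : LinearIndependent F a) (hb : LinearIndependent F b)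
    (hab : ∀ k, a k ∈ Submodule.span F (Set.range b)) :
    Submodule.span F (Set.range a) = Submodule.span F (Set.range b) := by
  have : FiniteDimensional F (Submodule.span F (Set.range b)) :=
    FiniteDimensional.span_of_finite F (Set.finite_range b)
  refine Submodule.eq_of_le_of_finrank_eq ?_ ?_
  · rw [Submodule.span_le]
    rintro _ ⟨k, rfl⟩
    exact hab k
  · rw [finrank_span_eq_card ha, finrank_span_eq_card hb]

lemma exists_perm_extending {p q : ℕ} (hpq : p ≤ q) (i : Fin p → Fin q)
    (hi : Function.Injective i) :
    ∃ e : Equiv.Perm (Fin q), ∀ k, e (Fin.castLE hpq k) = i k := by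
  classical
  let c : Fin p → Fin q := Fin.castLE hpq
  have hc : Function.Injective c := Fin.castLE_injective hpq
  let e₀ : {x // x ∈ Set.range c} ≃ {x // x ∈ Set.range i} :=
    (Equiv.ofInjective c hc).symm.trans (Equiv.ofInjective i hi)
  refine ⟨e₀.extendSubtype, fun k => ?_⟩
  rw [Equiv.extendSubtype_apply_of_mem e₀ (c k) ⟨k, rfl⟩]
  have : (Equiv.ofInjective c hc).symm ⟨c k, ⟨k, rfl⟩⟩ = k :=
    Equiv.ofInjective_symm_apply hc k
  simp only [e₀, Equiv.trans_apply, this, Equiv.ofInjective_apply]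

/-- The linear algebra behind the theorem: `B` and `v` play the roles of the `β_κ` and of the
`∂ μ_j`, and the matching of leading indices `i` has `j = id`. -/
lemma exists_adapted_basis {F E : Type*} [Field F] [AddCommGroup E] [Module F E] {p q : ℕ}
    (B : Fin q → E) (hB : LinearIndependent F B) (v : Fin p → E) (hv : LinearIndependent F v)
    (hvB : ∀ k, v k ∈ Submodule.span F (Set.range B)) :
    ∃ (hpq : p ≤ q) (φ : Fin q → E) (i : Fin p → Fin q), Function.Injective i ∧
      (LinearIndependent F φ ∧
        Submodule.span F (Set.range φ) = Submodule.span F (Set.range B)) ∧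
      (LinearIndependent F (fun k : Fin p => φ (Fin.castLE hpq k)) ∧
        Submodule.span F (Set.range fun k : Fin p => φ (Fin.castLE hpq k)) =
          Submodule.span F (Set.range v)) ∧
      ((Set.range fun k : {k : Fin q // p ≤ (k : ℕ)} => φ (↑k : Fin q)) =
        B '' {l : Fin q | l ∉ Set.range i}) ∧
      (∀ k : Fin p, ∃ (b : Fin q → F) (d : Fin p → F),
        b (i k) ≠ 0 ∧ d k ≠ 0 ∧ (∀ l, l < i k → b l = 0) ∧ (∀ h, k < h → d h = 0) ∧
        φ (Fin.castLE hpq k) = ∑ l, b l • B l ∧ φ (Fin.castLE hpq k) = ∑ h, d h • v h) := by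
  classical
  let T : (Fin q → F) →ₗ[F] E := Fintype.linearCombination F B
  have hT : ∀ x, T x = ∑ l, x l • B l := fun x => Fintype.linearCombination_apply F B x
  have hTker : LinearMap.ker T = ⊥ := by
    rw [LinearMap.ker_eq_bot']
    intro x hx
    rw [hT] at hx
    exact funext (Fintype.linearIndependent_iff.1 hB x hx)
  have hcoord : ∀ k, ∃ x : Fin q → F, T x = v k := by
    intro k
    obtain ⟨x, hx⟩ := (Submodule.mem_span_range_iff_exists_fun F).1 (hvB k)
    exact ⟨x, (hT x).trans hx⟩
  choose x hx using hcoord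
  have hxli : LinearIndependent F x := by
    refine LinearIndependent.of_comp T ?_
    have : (T ∘ x) = v := funext hx
    rwa [this]
  obtain ⟨i, D, hi, hD⟩ := exists_reduction x hxli
  have hpq : p ≤ q := by simpa using Fintype.card_le_of_injective i hi
  obtain ⟨e, he⟩ := exists_perm_extending hpq i hi
  let u : Fin q → Fin q → F := fun k =>
    if h : (k : ℕ) < p then ∑ a, D ⟨k, h⟩ a • x a else Pi.single (e k) 1
  have hu1 : ∀ k : Fin p, u (Fin.castLE hpq k) = ∑ a, D k a • x a := by
    intro k
    simp [u]
  have hu2 : ∀ k : Fin q, p ≤ (k : ℕ) → u k = Pi.single (e k) 1 := by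
    intro k hk
    simp only [u]
    rw [dif_neg (not_lt.2 hk)]
  have hcases : ∀ k : Fin q, (∃ k' : Fin p, Fin.castLE hpq k' = k) ∨ p ≤ (k : ℕ) := by
    intro k
    by_cases h : (k : ℕ) < p
    · exact Or.inl ⟨⟨k, h⟩, rfl⟩
    · exact Or.inr (not_lt.1 h)
  have huli : LinearIndependent F u := by
    refine linearIndependent_of_leading u e e.injective ?_ ?_
    · intro k
      rcases hcases k with ⟨k', rfl⟩ | hk
      · rw [hu1, he]
        exact (hD k').2.2.1
      · rw [hu2 k hk]
        simp
    · intro k l hl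
      rcases hcases k with ⟨k', rfl⟩ | hk
      · rw [he] at hl
        rw [hu1]
        exact (hD k').2.2.2 l hl
      · rw [hu2 k hk]
        exact Pi.single_eq_of_ne hl.ne _
  have hφ1 : ∀ k : Fin p, T (u (Fin.castLE hpq k)) = ∑ h, D k h • v h := by
    intro k
    rw [hu1, map_sum]
    exact sum_congr rfl fun a _ => by rw [map_smul, hx]
  have hφ2 : ∀ k : Fin q, p ≤ (k : ℕ) → T (u k) = B (e k) := by
    intro k hk
    rw [hu2 k hk, hT, sum_eq_single (e k)]
    · simp
    · intro a _ ha
      simp [Pi.single_eq_of_ne ha]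
    · simp
  have hφli : LinearIndependent F (fun k => T (u k)) := huli.map' T hTker
  have hφli' : LinearIndependent F (fun k : Fin p => T (u (Fin.castLE hpq k))) :=
    hφli.comp _ (Fin.castLE_injective hpq)
  refine ⟨hpq, fun k => T (u k), i, hi, ⟨hφli, ?_⟩, ⟨hφli', ?_⟩, ?_, ?_⟩
  · refine span_eq_of_mem hφli hB fun k => ?_
    rw [hT]
    exact (Submodule.mem_span_range_iff_exists_fun F).2 ⟨u k, rfl⟩
  · refine span_eq_of_mem hφli' hv fun k => ?_
    change T (u (Fin.castLE hpq k)) ∈ _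
    rw [hφ1]
    exact (Submodule.mem_span_range_iff_exists_fun F).2 ⟨D k, rfl⟩
  · ext z
    constructor
    · rintro ⟨⟨k, hk⟩, rfl⟩
      refine ⟨e k, ?_, (hφ2 k hk).symm⟩
      rintro ⟨k', hk'⟩
      rw [← he] at hk'
      have := e.injective hk'
      rw [← this] at hk
      exact absurd k'.isLt (not_lt.2 hk)
    · rintro ⟨l, hl, rfl⟩
      have hk : p ≤ (e.symm l : ℕ) := by
        rcases hcases (e.symm l) with ⟨k', hk'⟩ | hk
        · refine absurd ⟨k', ?_⟩ hl
          rw [← he, hk', e.apply_symm_apply]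
        · exact hk
      refine ⟨⟨e.symm l, hk⟩, ?_⟩
      change T (u (e.symm l)) = B l
      rw [hφ2 _ hk, e.apply_symm_apply]
  · intro k
    refine ⟨u (Fin.castLE hpq k), D k, ?_, ?_, ?_, (hD k).2.1, hT _, hφ1 k⟩
    · rw [hu1]
      exact (hD k).2.2.1
    · rw [(hD k).1]
      exact one_ne_zero
    · rw [hu1]
      exact (hD k).2.2.2

/-! ### Boundaries in a weighted complex -/

lemma bdry_single_mem_supported (F : Type*) [Field F] (K : WeightedComplex V) (n : ℕ)
    {σ : Finset V} (hσ : σ ∈ nCells K.simplices (n + 1)) :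
    bdry F (Finsupp.single σ (1 : F)) ∈
      Finsupp.supported F F (↑(nCells K.simplices n) : Set (Finset V)) := by
  obtain ⟨hσK, hcard⟩ := mem_filter.1 hσ
  rw [bdry_single, if_pos (by omega)]
  refine Submodule.sum_mem _ fun x hx => Submodule.smul_mem _ _ ?_
  refine Finsupp.single_mem_supported F _ ?_
  have hc : (σ.erase x).card = n + 1 := by
    rw [card_erase_of_mem hx]
    omega
  exact mem_coe.2 (mem_filter.2 ⟨K.down_closed σ hσK _ (erase_subset _ _)
    (card_pos.1 (by omega)), hc⟩)

/-- **Theorem 2, the φ-basis theorem.** Let `(X, ω)` be a weighted complex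
with Lemma 1 data: `K_n = {κ_1, …, κ_q}` (with `ω(κ_i) ≤ ω(κ_{i+1})`) carrying the
distinguished cycles `β_κ`, and `M_{n+1} = {μ_1, …, μ_p}` (with `ω(μ_j) ≥ ω(μ_{j+1})`) such
that `{∂_{n+1} μ_j}` is an `𝔽`-basis of `Im ∂_{n+1}`.  Then there is an `𝔽`-basis
`φ_1, …, φ_q` of `ker ∂ₙ` such that: (1) `φ_1, …, φ_p` is an `𝔽`-basis of
`∂_{n+1}(C_{n+1}(X; 𝔽))`; (2) there are a subset `K_1 = {κ_{i_1}, …, κ_{i_p}}` of `K_n`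
(with complement `K_2`) and a bijection `Φ : K_1 → M_{n+1}`, `Φ(κ_{i_k}) = μ_{j_k}`, such
that `{φ_{p+1}, …, φ_q} = {β_κ : κ ∈ K_2}` and, for `1 ≤ k ≤ p`,
`φ_k = Σ_{l ≥ i_k} b_l β_{κ_l} = Σ_{h ≤ j_k} d_h ∂_{n+1}(μ_h)` with `b_{i_k} ≠ 0` and
`d_{j_k} ≠ 0`. -/
theorem phi_basis_theorem
    (F : Type*) [Field F] (K : WeightedComplex V) (n : ℕ)
    (q p : ℕ) (Ks Ms : Finset (Finset V))
    (κ : Fin q → Finset V) (μ : Fin p → Finset V)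
    (hκinj : Function.Injective κ) (hκran : Set.range κ = ↑Ks)
    (hκord : ∀ k l : Fin q, k ≤ l → K.w (κ k) ≤ K.w (κ l))
    (hμinj : Function.Injective μ) (hμran : Set.range μ = ↑Ms)
    (hμord : ∀ k l : Fin p, k ≤ l → K.w (μ l) ≤ K.w (μ k))
    -- Lemma 1 data in dimension n
    (β : Finset V → (Finset V →₀ F))
    (hKs : Ks ⊆ nCells K.simplices n)
    (hβ : ∀ x ∈ Ks, bdry F (β x) = 0 ∧ β x x = 1 ∧
      (β x).support ⊆ insert x (nCells K.simplices n \ Ks) ∧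
      ∀ σ ∈ (β x).support, K.w x ≤ K.w σ)
    (hβind : LinearIndependent F (fun x : ↥Ks => β (↑x : Finset V)))
    (hβspan : Submodule.span F (β '' ↑Ks) =
      Finsupp.supported F F ↑(nCells K.simplices n) ⊓ LinearMap.ker (bdry (V := V) F))
    -- Lemma 1 complement data in dimension n+1
    (hMs : Ms ⊆ nCells K.simplices (n + 1))
    (hMind : LinearIndependent F
      (fun j : Fin p => bdry (V := V) F (Finsupp.single (μ j) (1 : F))))
    (hMspan : Submodule.span F
        ((fun x => bdry (V := V) F (Finsupp.single x (1 : F))) '' ↑Ms) =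
      (Finsupp.supported F F ↑(nCells K.simplices (n + 1))).map (bdry (V := V) F)) :
    ∃ (hpq : p ≤ q) (φ : Fin q → (Finset V →₀ F)) (i : Fin p → Fin q) (j : Fin p → Fin p),
      Function.Injective i ∧ Function.Bijective j ∧
      -- φ_1, …, φ_q is an 𝔽-basis of ker ∂ₙ
      (LinearIndependent F φ ∧
        Submodule.span F (Set.range φ) =
          Finsupp.supported F F ↑(nCells K.simplices n) ⊓ LinearMap.ker (bdry (V := V) F)) ∧
      -- (1) φ_1, …, φ_p is an 𝔽-basis of Im ∂_{n+1}
      (LinearIndependent F (fun k : Fin p => φ (Fin.castLE hpq k)) ∧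
        Submodule.span F (Set.range fun k : Fin p => φ (Fin.castLE hpq k)) =
          (Finsupp.supported F F ↑(nCells K.simplices (n + 1))).map (bdry (V := V) F)) ∧
      -- (2) {φ_{p+1}, …, φ_q} = {β_κ : κ ∈ K_2}
      ((Set.range fun k : {k : Fin q // p ≤ (k : ℕ)} => φ (↑k : Fin q)) =
        (fun l => β (κ l)) '' {l : Fin q | l ∉ Set.range i}) ∧
      -- and φ_k = Σ_{l ≥ i_k} b_l β_{κ_l} = Σ_{h ≤ j_k} d_h ∂_{n+1}(μ_h)
      (∀ k : Fin p, ∃ (b : Fin q → F) (d : Fin p → F),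
        b (i k) ≠ 0 ∧ d (j k) ≠ 0 ∧
        (∀ l, l < i k → b l = 0) ∧ (∀ h, j k < h → d h = 0) ∧
        φ (Fin.castLE hpq k) = ∑ l, b l • β (κ l) ∧
        φ (Fin.castLE hpq k) =
          ∑ h, d h • bdry (V := V) F (Finsupp.single (μ h) (1 : F))) := by
  have hBran : Set.range (fun l => β (κ l)) = β '' ↑Ks := by
    rw [← hκran, ← Set.range_comp]
    rfl
  have hvran : Set.range (fun j : Fin p => bdry (V := V) F (Finsupp.single (μ j) (1 : F))) =
      (fun x => bdry (V := V) F (Finsupp.single x (1 : F))) '' ↑Ms := by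
    rw [← hμran, ← Set.range_comp]
    rfl
  have hκmem : ∀ l, κ l ∈ Ks := fun l => mem_coe.1 (hκran ▸ Set.mem_range_self l)
  have hμmem : ∀ l, μ l ∈ Ms := fun l => mem_coe.1 (hμran ▸ Set.mem_range_self l)
  have hB : LinearIndependent F (fun l => β (κ l)) :=
    hβind.comp (fun l => (⟨κ l, hκmem l⟩ : ↥Ks)) fun a b hab =>
      hκinj (congrArg Subtype.val hab)
  obtain ⟨hpq, φ, i, hi, hφ, hφ1, hφ2, hφ3⟩ := exists_adapted_basis (fun l => β (κ l)) hB
    (fun j : Fin p => bdry (V := V) F (Finsupp.single (μ j) (1 : F))) hMind (by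
      intro k
      rw [hBran, hβspan]
      exact ⟨bdry_single_mem_supported F K n (hMs (hμmem k)), bdry_bdry_single F (μ k)⟩)
  rw [hBran, hβspan] at hφ
  rw [hvran, hMspan] at hφ1
  exact ⟨hpq, φ, i, id, hi, Function.bijective_id, hφ, hφ1, hφ2, hφ3⟩
end
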